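/- arXiv:2310.02012 — 2 statements merged into one kernel-verified Lean document; each statement's English description precedes it below -/
import Mathlib

section
/- Let d ≥ 2 and let X ∈ ℝ^{d×d} be a nonsingular matrix whose rows all have unit Euclidean norm (i.e., X is in the image of BN). Let λ_1, …, λ_d be the eigenvalues of XXᵀ, and let W be a random matrix distributed according to the Haar probability measure on the orthogonal group O(d). Then E_W[ I(BN(WX)) ] ≥ ( 1 − Σ_{k=1}^d (λ_k − 1)² / (2d²(d+2)) )^{−1} · I(X), with equality when X is orthogonal. -/
open MeasureTheory Matrix

/-- Euclidean norm of the `i`-th row of a square real matrix. -/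
noncomputable def rowNorm {d : ℕ} (X : Matrix (Fin d) (Fin d) ℝ) (i : Fin d) : ℝ :=
  Real.sqrt (∑ j, X i j ^ 2)

/-- Batch normalization (without mean reduction): each row is rescaled to unit norm. -/
noncomputable def BN {d : ℕ} (X : Matrix (Fin d) (Fin d) ℝ) : Matrix (Fin d) (Fin d) ℝ :=
  Matrix.of fun i j => X i j / rowNorm X i

/-- Isometry gap `φ(X) = -log( det(XᵀX)^{1/d} / ((1/d) Tr(XᵀX)) )`. -/
noncomputable def isoGap {d : ℕ} (X : Matrix (Fin d) (Fin d) ℝ) : ℝ :=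
  - Real.log ((Xᵀ * X).det ^ ((1 : ℝ) / d) / ((1 / d : ℝ) * (Xᵀ * X).trace))

/-- Isometry `I(X) = exp(-φ(X))`. -/
noncomputable def isoI {d : ℕ} (X : Matrix (Fin d) (Fin d) ℝ) : ℝ :=
  Real.exp (- isoGap X)

/-- Matrices inherit the (Borel) product measurable structure of `Fin d → Fin d → ℝ`. -/
instance matrixMeasurableSpace {d : ℕ} : MeasurableSpace (Matrix (Fin d) (Fin d) ℝ) :=
  (inferInstance : MeasurableSpace (Fin d → Fin d → ℝ))

/-- `μ` is the Haar probability measure on the orthogonal group `O(d)`, viewed as a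
measure on `d × d` real matrices: it is a probability measure, concentrated on the
orthogonal matrices, and invariant under left and right translation by any orthogonal
matrix (these properties characterize the Haar probability measure uniquely). -/
def IsHaarOrthogonal {d : ℕ} (μ : Measure (Matrix (Fin d) (Fin d) ℝ)) : Prop :=
  IsProbabilityMeasure μ ∧
  (∀ᵐ W ∂μ, Wᵀ * W = 1) ∧
  ∀ U : Matrix (Fin d) (Fin d) ℝ, Uᵀ * U = 1 →
    μ.map (fun W => U * W) = μ ∧ μ.map (fun W => W * U) = μ

/-!
Since `BN` divides row `i` of `Y` by its norm `rᵢ`, `isoI (BN Y)` is `isoI Y` times the ratio of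
the arithmetic to the geometric mean of the numbers `rᵢ²`. When these sum to `d`, bounding
`log s ≤ s - 1 - (s - 1)² / (2d)` on `(0, d]` shows that this ratio is at least
`1 + ∑ (rᵢ² - 1)² / (2d²)`.

For `Y = W * X` with `W` Haar distributed, each row of `W` is uniform on the sphere, and
`rᵢ² - 1` is the quadratic form with eigenvalues `λₖ - 1`, which has trace zero, evaluated at that
row. The fourth moments of the uniform distribution on the sphere give it the second moment
`2 ∑ (λₖ - 1)² / (d (d + 2))`. Hence the expectation is at least `(1 + q) * isoI X` with
`q = ∑ (λₖ - 1)² / (d² (d + 2)) ≤ 1`, and `1 + q ≥ (1 - q / 2)⁻¹` on `[0, 1]`.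
-/

section Inequalities

lemma log_le_sub_one_sub_sq_div {D x : ℝ} (hD : 1 ≤ D) (hx : 0 < x) (hxD : x ≤ D) :
    Real.log x ≤ x - 1 - (x - 1) ^ 2 / (2 * D) := by
  let f : ℝ → ℝ := fun t => t - 1 - (t - 1) ^ 2 / (2 * D) - Real.log t
  have hf : ∀ t, 0 < t → HasDerivAt f ((t - 1) * (1 / t - 1 / D)) t := fun t ht => by
    refine ((((hasDerivAt_id t).sub_const 1).sub ((((hasDerivAt_id t).sub_const 1).pow 2).div_const
      (2 * D))).sub (Real.hasDerivAt_log ht.ne')).congr_deriv ?_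
    simp only [id]
    field_simp
    ring
  have hmin : IsMinOn f (Set.Ioc 0 D) 1 := by
    refine isMinOn_Ioc_of_deriv (hf 1 one_pos).continuousAt (hf D (by linarith)).continuousAt
      (fun t ht => (hf t ht.1).differentiableAt.differentiableWithinAt)
      (fun t ht => (hf t (one_pos.trans ht.1)).differentiableAt.differentiableWithinAt)
      (fun t ht => ?_) (fun t ht => ?_)
    · rw [(hf t ht.1).deriv]
      exact mul_nonpos_of_nonpos_of_nonneg (by linarith [ht.2])
        (sub_nonneg.2 (one_div_le_one_div_of_le ht.1 (ht.2.le.trans hD)))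
    · have ht0 : 0 < t := one_pos.trans ht.1
      rw [(hf t ht0).deriv]
      exact mul_nonneg (by linarith [ht.1])
        (sub_nonneg.2 (one_div_le_one_div_of_le ht0 ht.2.le))
  have h : f 1 ≤ f x := hmin ⟨hx, hxD⟩
  have hf1 : f 1 = 0 := by simp [f]
  linarith [hf1 ▸ h]

lemma inv_one_sub_half_le_one_add {q : ℝ} (hq₀ : 0 ≤ q) (hq₁ : q ≤ 1) :
    (1 - q / 2)⁻¹ ≤ 1 + q := by
  rw [inv_le_iff_one_le_mul₀ (by linarith)]
  nlinarith

variable {ι : Type*} [Fintype ι]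

lemma one_add_sum_sq_mul_geom_mean_le_one {s : ι → ℝ} (hs : ∀ i, 0 < s i)
    (hsum : ∑ i, s i = Fintype.card ι) :
    (1 + (∑ i, (s i - 1) ^ 2) / (2 * (Fintype.card ι : ℝ) ^ 2)) *
      (∏ i, s i) ^ (1 / (Fintype.card ι : ℝ)) ≤ 1 := by
  rcases isEmpty_or_nonempty ι with hι | hι
  · simp
  set n : ℝ := (Fintype.card ι : ℝ) with hn
  have hn1 : 1 ≤ n := by exact Nat.one_le_cast.2 Fintype.card_pos
  have hsn (i : ι) : s i ≤ n :=
    hsum ▸ Finset.single_le_sum (fun j _ => (hs j).le) (Finset.mem_univ i)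
  have hprod : 0 < ∏ i, s i := Finset.prod_pos fun i _ => hs i
  have hlog : Real.log (∏ i, s i) ≤ -((∑ i, (s i - 1) ^ 2) / (2 * n)) := by
    calc Real.log (∏ i, s i) = ∑ i, Real.log (s i) := Real.log_prod fun i _ => (hs i).ne'
      _ ≤ ∑ i, (s i - 1 - (s i - 1) ^ 2 / (2 * n)) :=
          Finset.sum_le_sum fun i _ => log_le_sub_one_sub_sq_div hn1 (hs i) (hsn i)
      _ = -((∑ i, (s i - 1) ^ 2) / (2 * n)) := by
          simp [Finset.sum_sub_distrib, hsum, ← Finset.sum_div, hn]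
  set q := (∑ i, (s i - 1) ^ 2) / (2 * n ^ 2) with hq
  have hgeom : (∏ i, s i) ^ (1 / n) ≤ Real.exp (-q) := by
    rw [Real.rpow_def_of_pos hprod, Real.exp_le_exp]
    calc Real.log (∏ i, s i) * (1 / n) ≤ -((∑ i, (s i - 1) ^ 2) / (2 * n)) * (1 / n) := by gcongr
      _ = -q := by rw [hq]; field_simp
  calc (1 + q) * (∏ i, s i) ^ (1 / n) ≤ Real.exp q * Real.exp (-q) := by
        gcongr
        linarith [Real.add_one_le_exp q]
    _ = 1 := by rw [← Real.exp_add, add_neg_cancel, Real.exp_zero]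

lemma det_rpow_le_trace_div_card [Nonempty ι] [DecidableEq ι] {A : Matrix ι ι ℝ}
    (hA : A.PosSemidef) :
    A.det ^ (1 / (Fintype.card ι : ℝ)) ≤ A.trace / Fintype.card ι := by
  have hdet := hA.1.det_eq_prod_eigenvalues
  have htr := hA.1.trace_eq_sum_eigenvalues
  simp only [RCLike.ofReal_real_eq_id, id] at hdet htr
  rw [hdet, htr, ← Real.finsetProd_rpow _ _ fun i _ => hA.eigenvalues_nonneg i]
  refine (Real.geom_mean_le_arith_mean_weighted Finset.univ (fun _ => 1 / (Fintype.card ι : ℝ)) _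
    (fun _ _ => by positivity) (by simp) fun i _ => hA.eigenvalues_nonneg i).trans_eq ?_
  rw [← Finset.mul_sum, one_div_mul_eq_div]

end Inequalities

section Isometry

variable {d : ℕ}

lemma rowNorm_nonneg (Y : Matrix (Fin d) (Fin d) ℝ) (i : Fin d) : 0 ≤ rowNorm Y i :=
  Real.sqrt_nonneg _

lemma rowNorm_eq_norm (Y : Matrix (Fin d) (Fin d) ℝ) (i : Fin d) :
    rowNorm Y i = ‖WithLp.toLp 2 (Y i)‖ := by
  simp [rowNorm, EuclideanSpace.norm_eq]

lemma rowNorm_pos {Y : Matrix (Fin d) (Fin d) ℝ} (hY : Y.det ≠ 0) (i : Fin d) :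
    0 < rowNorm Y i := by
  rw [rowNorm_eq_norm, norm_pos_iff]
  intro h
  exact hY (Matrix.det_eq_zero_of_row_eq_zero i fun j => congrArg (· j) h)

lemma rowNorm_of_mem_orthogonalGroup {W : Matrix (Fin d) (Fin d) ℝ}
    (hW : W ∈ orthogonalGroup (Fin d) ℝ) (i : Fin d) : rowNorm W i = 1 := by
  have h : (W * Wᵀ) i i = 1 := by rw [(mem_orthogonalGroup_iff _ _).1 hW, one_apply_eq]
  rw [rowNorm, Real.sqrt_eq_one, ← h]
  simp [mul_apply, sq]

lemma trace_transpose_mul_self_eq_sum_rowNorm_sq (Y : Matrix (Fin d) (Fin d) ℝ) :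
    (Yᵀ * Y).trace = ∑ i, rowNorm Y i ^ 2 := by
  rw [trace_mul_comm]
  simp [rowNorm, trace, mul_apply, ← sq, Real.sq_sqrt, Finset.sum_nonneg, sq_nonneg]

lemma trace_mul_transpose_self_of_rowNorm_eq_one {X : Matrix (Fin d) (Fin d) ℝ}
    (hX : ∀ i, rowNorm X i = 1) : (X * Xᵀ).trace = d := by
  rw [trace_mul_comm, trace_transpose_mul_self_eq_sum_rowNorm_sq]
  simp [hX]

lemma rowNorm_mul_BN (Y : Matrix (Fin d) (Fin d) ℝ) (i j : Fin d) :
    rowNorm Y i * BN Y i j = Y i j := by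
  rcases eq_or_ne (rowNorm Y i) 0 with h | h
  · rw [h, zero_mul]
    rw [rowNorm_eq_norm, norm_eq_zero] at h
    exact (congrArg (· j) h).symm
  · simp [BN, mul_div_cancel₀ _ h]

lemma prod_rowNorm_mul_det_BN (Y : Matrix (Fin d) (Fin d) ℝ) :
    (∏ i, rowNorm Y i) * (BN Y).det = Y.det := by
  rw [← det_mul_column]
  simp only [rowNorm_mul_BN]
  rfl

lemma rowNorm_BN {Y : Matrix (Fin d) (Fin d) ℝ} {i : Fin d} (hY : rowNorm Y i ≠ 0) :
    rowNorm (BN Y) i = 1 := by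
  have h : √(∑ j, BN Y i j ^ 2) = √(∑ j, Y i j ^ 2) / rowNorm Y i := by
    simp only [BN, of_apply, div_pow, ← Finset.sum_div]
    rw [Real.sqrt_div (by positivity), Real.sqrt_sq (rowNorm_nonneg Y i)]
  rw [rowNorm, h, ← rowNorm, div_self hY]

lemma BN_eq_self {Y : Matrix (Fin d) (Fin d) ℝ} (hY : ∀ i, rowNorm Y i = 1) : BN Y = Y := by
  ext i j
  simp [BN, hY]

lemma isoI_pos (Y : Matrix (Fin d) (Fin d) ℝ) : 0 < isoI Y :=
  Real.exp_pos _

lemma isoI_eq_rpow_div [NeZero d] {Y : Matrix (Fin d) (Fin d) ℝ} (hY : Y.det ≠ 0) :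
    isoI Y = (Y.det ^ 2) ^ (1 / (d : ℝ)) / ((∑ i, rowNorm Y i ^ 2) / d) := by
  have hsum : 0 < ∑ i, rowNorm Y i ^ 2 :=
    Finset.sum_pos (fun i _ => pow_pos (rowNorm_pos hY i) 2) Finset.univ_nonempty
  have hd : (0 : ℝ) < d := by exact_mod_cast NeZero.pos d
  rw [isoI, isoGap, neg_neg, trace_transpose_mul_self_eq_sum_rowNorm_sq, det_mul, det_transpose,
    ← sq, one_div_mul_eq_div, Real.exp_log (by positivity)]

-- For singular `Y` the convention `log 0 = 0` gives `isoI Y = 1`.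
lemma isoI_le_one [NeZero d] (Y : Matrix (Fin d) (Fin d) ℝ) : isoI Y ≤ 1 := by
  have hpsd : (Yᵀ * Y).PosSemidef := by simpa using posSemidef_conjTranspose_mul_self Y
  have hle := det_rpow_le_trace_div_card hpsd
  rw [Fintype.card_fin] at hle
  have hpow : 0 ≤ (Yᵀ * Y).det ^ (1 / (d : ℝ)) := Real.rpow_nonneg hpsd.det_nonneg _
  rw [isoI, isoGap, neg_neg, Real.exp_le_one_iff, one_div_mul_eq_div]
  exact Real.log_nonpos (div_nonneg hpow (hpow.trans hle))
    (div_le_one_of_le₀ hle (hpow.trans hle))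

lemma transpose_mul_self_mul_of_mem_orthogonalGroup {W : Matrix (Fin d) (Fin d) ℝ}
    (hW : W ∈ orthogonalGroup (Fin d) ℝ) (X : Matrix (Fin d) (Fin d) ℝ) :
    (W * X)ᵀ * (W * X) = Xᵀ * X := by
  have hWW : Wᵀ * W = 1 := (mem_orthogonalGroup_iff' _ _).1 hW
  rw [transpose_mul, Matrix.mul_assoc, ← Matrix.mul_assoc Wᵀ, hWW, Matrix.one_mul]

lemma isoI_mul_of_mem_orthogonalGroup {W : Matrix (Fin d) (Fin d) ℝ}
    (hW : W ∈ orthogonalGroup (Fin d) ℝ) (X : Matrix (Fin d) (Fin d) ℝ) :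
    isoI (W * X) = isoI X := by
  rw [isoI, isoI, isoGap, isoGap, transpose_mul_self_mul_of_mem_orthogonalGroup hW]

lemma geom_mean_rowNorm_sq_mul_isoI_BN [NeZero d] {Y : Matrix (Fin d) (Fin d) ℝ}
    (hY : Y.det ≠ 0) :
    (∏ i, rowNorm Y i ^ 2) ^ (1 / (d : ℝ)) * isoI (BN Y) =
      (∑ i, rowNorm Y i ^ 2) / d * isoI Y := by
  have hdet := prod_rowNorm_mul_det_BN Y
  have hBN : (BN Y).det ≠ 0 := right_ne_zero_of_mul (hdet ▸ hY)
  have hsum : 0 < ∑ i, rowNorm Y i ^ 2 :=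
    Finset.sum_pos (fun i _ => pow_pos (rowNorm_pos hY i) 2) Finset.univ_nonempty
  have hd : (0 : ℝ) < d := by exact_mod_cast NeZero.pos d
  rw [isoI_eq_rpow_div hBN, isoI_eq_rpow_div hY, mul_div_cancel₀ _ (by positivity), ← hdet, mul_pow,
    Finset.prod_pow, Real.mul_rpow (by positivity) (by positivity)]
  simp [rowNorm_BN (rowNorm_pos hY _).ne', hd.ne']

lemma one_add_sum_sq_mul_isoI_le_isoI_BN [NeZero d] {Y : Matrix (Fin d) (Fin d) ℝ}
    (hY : Y.det ≠ 0) (hsum : ∑ i, rowNorm Y i ^ 2 = d) :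
    (1 + (∑ i, (rowNorm Y i ^ 2 - 1) ^ 2) / (2 * (d : ℝ) ^ 2)) * isoI Y ≤ isoI (BN Y) := by
  have hGM := geom_mean_rowNorm_sq_mul_isoI_BN hY
  rw [hsum, div_self (NeZero.ne _), one_mul] at hGM
  have h := one_add_sum_sq_mul_geom_mean_le_one (fun i => pow_pos (rowNorm_pos hY i) 2)
    (by simpa using hsum)
  rw [Fintype.card_fin] at h
  rw [← hGM, ← mul_assoc]
  exact mul_le_of_le_one_left (isoI_pos _).le h

lemma one_add_sum_sq_mul_isoI_le_isoI_BN_mul [NeZero d] {X W : Matrix (Fin d) (Fin d) ℝ}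
    (hX : X.det ≠ 0) (hrows : ∀ i, rowNorm X i = 1) (hW : W ∈ orthogonalGroup (Fin d) ℝ) :
    (1 + (∑ i, (rowNorm (W * X) i ^ 2 - 1) ^ 2) / (2 * (d : ℝ) ^ 2)) * isoI X ≤
      isoI (BN (W * X)) := by
  have hdet : (W * X).det ≠ 0 := by
    rw [det_mul]
    exact mul_ne_zero (det_ne_zero_of_right_inverse ((mem_orthogonalGroup_iff _ _).1 hW)) hX
  have hsum : ∑ i, rowNorm (W * X) i ^ 2 = d := by
    rw [← trace_transpose_mul_self_eq_sum_rowNorm_sq,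
      transpose_mul_self_mul_of_mem_orthogonalGroup hW, trace_mul_comm,
      trace_mul_transpose_self_of_rowNorm_eq_one hrows]
  simpa only [isoI_mul_of_mem_orthogonalGroup hW]
    using one_add_sum_sq_mul_isoI_le_isoI_BN hdet hsum

lemma measurable_isoI_BN_mul (X : Matrix (Fin d) (Fin d) ℝ) :
    Measurable fun W : Matrix (Fin d) (Fin d) ℝ => isoI (BN (W * X)) := by
  have hBN (i j : Fin d) : Measurable fun W : Matrix (Fin d) (Fin d) ℝ => BN (W * X) i j := by
    simp only [BN, rowNorm, of_apply, mul_apply]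
    fun_prop
  simp only [isoI, isoGap, det_apply, trace, diag, mul_apply, transpose_apply]
  fun_prop

end Isometry

section Sphere

open scoped RealInnerProductSpace

variable {E : Type*} [NormedAddCommGroup E] [InnerProductSpace ℝ E] [MeasurableSpace E]

/-- `ν` is the uniform distribution on the unit sphere of `E`, viewed as a measure on `E`: the
probability measure carried by the sphere that is invariant under all linear isometries. -/
structure IsUniformOnSphere (ν : Measure E) : Prop where
  isProbabilityMeasure : IsProbabilityMeasure ν
  ae_norm_eq_one : ∀ᵐ w ∂ν, ‖w‖ = 1
  measurePreserving (g : E ≃ₗᵢ[ℝ] E) : MeasurePreserving g ν ν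

namespace IsUniformOnSphere

variable [BorelSpace E] {ν : Measure E}

lemma integral_comp_inner_eq_of_norm_eq (hν : IsUniformOnSphere ν) {u v : E} (huv : ‖u‖ = ‖v‖)
    (f : ℝ → ℝ) : ∫ w, f ⟪u, w⟫ ∂ν = ∫ w, f ⟪v, w⟫ ∂ν := by
  let g : E ≃ₗᵢ[ℝ] E := (ℝ ∙ (v - u))ᗮ.reflection
  have hg : g v = u := Submodule.reflection_sub huv.symm
  rw [← (hν.measurePreserving g).integral_comp g.toHomeomorph.measurableEmbedding]
  simp_rw [← hg, LinearIsometryEquiv.inner_map_map]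

lemma integral_inner_pow_four_eq (hν : IsUniformOnSphere ν) {e : E} (he : ‖e‖ = 1) (u : E) :
    ∫ w, ⟪u, w⟫ ^ 4 ∂ν = ‖u‖ ^ 4 * ∫ w, ⟪e, w⟫ ^ 4 ∂ν := by
  have hnorm : ‖u‖ = ‖‖u‖ • e‖ := by rw [norm_smul, he, norm_norm, mul_one]
  rw [hν.integral_comp_inner_eq_of_norm_eq hnorm (· ^ 4), ← integral_const_mul]
  simp only [real_inner_smul_left, mul_pow]

variable [FiniteDimensional ℝ E]

lemma integrable (hν : IsUniformOnSphere ν) {f : E → ℝ} (hf : Continuous f) : Integrable f ν := by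
  have := hν.isProbabilityMeasure
  obtain ⟨C, hC⟩ := (isCompact_sphere (0 : E) 1).exists_bound_of_continuousOn hf.continuousOn
  refine Integrable.of_bound hf.aestronglyMeasurable C ?_
  filter_upwards [hν.ae_norm_eq_one] with w hw using hC w (mem_sphere_zero_iff_norm.2 hw)

-- Compare the fourth moments along `u + v` and `u - v`, both of norm `√2`, with the one along `u`.
lemma three_mul_integral_inner_sq_mul_inner_sq (hν : IsUniformOnSphere ν) {u v : E}
    (hu : ‖u‖ = 1) (hv : ‖v‖ = 1) (huv : ⟪u, v⟫ = 0) :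
    3 * ∫ w, ⟪u, w⟫ ^ 2 * ⟪v, w⟫ ^ 2 ∂ν = ∫ w, ⟪u, w⟫ ^ 4 ∂ν := by
  have hadd : ‖u + v‖ ^ 4 = 4 := by
    rw [pow_mul ‖u + v‖ 2 2, norm_add_sq_real, hu, hv, huv]
    norm_num
  have hsub : ‖u - v‖ ^ 4 = 4 := by
    rw [pow_mul ‖u - v‖ 2 2, norm_sub_sq_real, hu, hv, huv]
    norm_num
  have hpolar : ∫ w, ⟪u + v, w⟫ ^ 4 ∂ν + ∫ w, ⟪u - v, w⟫ ^ 4 ∂ν =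
      2 * ∫ w, ⟪u, w⟫ ^ 4 ∂ν + 12 * ∫ w, ⟪u, w⟫ ^ 2 * ⟪v, w⟫ ^ 2 ∂ν
        + 2 * ∫ w, ⟪v, w⟫ ^ 4 ∂ν := by
    simp only [← integral_const_mul]
    rw [← integral_add, ← integral_add, ← integral_add]
    · congr 1 with _
      simp only [inner_add_left, inner_sub_left]
      ring
    all_goals exact hν.integrable (by fun_prop)
  rw [hν.integral_inner_pow_four_eq hu (u + v), hν.integral_inner_pow_four_eq hu (u - v),
    hν.integral_inner_pow_four_eq hu v, hadd, hsub, hv] at hpolar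
  linarith

variable {ι : Type*} [Fintype ι]

lemma sum_sum_integral_inner_sq_mul_inner_sq (hν : IsUniformOnSphere ν)
    (b : OrthonormalBasis ι ℝ E) :
    ∑ k, ∑ l, ∫ w, ⟪b k, w⟫ ^ 2 * ⟪b l, w⟫ ^ 2 ∂ν = 1 := by
  have := hν.isProbabilityMeasure
  calc ∑ k, ∑ l, ∫ w, ⟪b k, w⟫ ^ 2 * ⟪b l, w⟫ ^ 2 ∂ν
      = ∫ w, ∑ k, ∑ l, ⟪b k, w⟫ ^ 2 * ⟪b l, w⟫ ^ 2 ∂ν := by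
        rw [integral_finsetSum _ fun k _ => hν.integrable (by fun_prop)]
        congr! 1 with k
        rw [integral_finsetSum _ fun l _ => hν.integrable (by fun_prop)]
    _ = ∫ _, (1 : ℝ) ∂ν := by
        refine integral_congr_ae ?_
        filter_upwards [hν.ae_norm_eq_one] with w hw
        rw [← Finset.sum_mul_sum, b.sum_sq_inner_right, hw]
        norm_num
    _ = 1 := by simp

lemma integral_inner_sq_mul_inner_sq [DecidableEq ι] (hν : IsUniformOnSphere ν)
    (b : OrthonormalBasis ι ℝ E) (k l : ι) :
    ∫ w, ⟪b k, w⟫ ^ 2 * ⟪b l, w⟫ ^ 2 ∂ν =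
      (1 + if k = l then 2 else 0) / ((Fintype.card ι : ℝ) * (Fintype.card ι + 2)) := by
  set a : ℝ := ∫ w, ⟪b k, w⟫ ^ 4 ∂ν
  have hmoment (p q : ι) : ∫ w, ⟪b p, w⟫ ^ 2 * ⟪b q, w⟫ ^ 2 ∂ν =
      a / 3 * (1 + if p = q then 2 else 0) := by
    have hp : ∫ w, ⟪b p, w⟫ ^ 4 ∂ν = a :=
      hν.integral_comp_inner_eq_of_norm_eq (by simp) (· ^ 4)
    rcases eq_or_ne p q with rfl | hpq
    · simp only [← pow_add, if_true, ← hp]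
      ring
    · rw [if_neg hpq, ← hp, ← hν.three_mul_integral_inner_sq_mul_inner_sq (b.norm_eq_one p)
        (b.norm_eq_one q) (b.inner_eq_zero hpq)]
      ring
  have htotal : a / 3 * ((Fintype.card ι : ℝ) * (Fintype.card ι + 2)) = 1 := by
    rw [← hν.sum_sum_integral_inner_sq_mul_inner_sq b]
    simp only [hmoment, ← Finset.mul_sum, Finset.sum_add_distrib, Finset.sum_ite_eq,
      Finset.mem_univ, if_true, Finset.sum_const, Finset.card_univ, nsmul_eq_mul, mul_one]
    ring
  rw [hmoment, eq_div_iff (right_ne_zero_of_mul_eq_one htotal)]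
  linear_combination (1 + if k = l then (2 : ℝ) else 0) * htotal

lemma integral_sum_mul_inner_sq_sq (hν : IsUniformOnSphere ν) (b : OrthonormalBasis ι ℝ E)
    (m : ι → ℝ) :
    ∫ w, (∑ k, m k * ⟪b k, w⟫ ^ 2) ^ 2 ∂ν =
      ((∑ k, m k) ^ 2 + 2 * ∑ k, m k ^ 2) /
        ((Fintype.card ι : ℝ) * (Fintype.card ι + 2)) := by
  classical
  calc ∫ w, (∑ k, m k * ⟪b k, w⟫ ^ 2) ^ 2 ∂ν
      = ∫ w, ∑ k, ∑ l, m k * m l * (⟪b k, w⟫ ^ 2 * ⟪b l, w⟫ ^ 2) ∂ν := by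
        simp only [sq (∑ k, m k * _), Finset.sum_mul_sum, mul_mul_mul_comm (m _)]
    _ = ∑ k, ∑ l, m k * m l * ∫ w, ⟪b k, w⟫ ^ 2 * ⟪b l, w⟫ ^ 2 ∂ν := by
        rw [integral_finsetSum _ fun k _ => hν.integrable (by fun_prop)]
        congr! 1 with k
        rw [integral_finsetSum _ fun l _ => hν.integrable (by fun_prop)]
        simp only [integral_const_mul]
    _ = _ := by
        simp only [hν.integral_inner_sq_mul_inner_sq b, mul_div_assoc', ← Finset.sum_div, mul_add,
          mul_one, Finset.sum_add_distrib, mul_ite, mul_zero, Finset.sum_ite_eq, Finset.mem_univ,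
          if_true, ← Finset.sum_mul_sum, ← Finset.sum_mul]
        simp only [← sq, mul_comm _ (2 : ℝ)]

end IsUniformOnSphere

end Sphere

section Eigenvalues

open scoped RealInnerProductSpace

variable {n : Type*} [Fintype n] [DecidableEq n] {A : Matrix n n ℝ}

lemma dotProduct_mulVec_self_eq_sum_eigenvalues (hA : A.IsHermitian) (x : n → ℝ) :
    x ⬝ᵥ A *ᵥ x = ∑ k, hA.eigenvalues k * ⟪hA.eigenvectorBasis k, WithLp.toLp 2 x⟫ ^ 2 := by
  have hinner (k : n) : ⟪hA.eigenvectorBasis k, WithLp.toLp 2 (A *ᵥ x)⟫ =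
      hA.eigenvalues k * ⟪hA.eigenvectorBasis k, WithLp.toLp 2 x⟫ := by
    have hsymm := isSymmetric_toEuclideanLin_iff.2 hA (hA.eigenvectorBasis k) (WithLp.toLp 2 x)
    rw [toLpLin_toLp, toLpLin_apply, toLin'_apply, hA.mulVec_eigenvectorBasis] at hsymm
    rw [← hsymm, WithLp.toLp_smul, real_inner_smul_left]
  calc x ⬝ᵥ A *ᵥ x = ⟪WithLp.toLp 2 x, WithLp.toLp 2 (A *ᵥ x)⟫ := by
        simp [EuclideanSpace.inner_toLp_toLp, dotProduct_comm]
    _ = _ := by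
        rw [← hA.eigenvectorBasis.sum_inner_mul_inner]
        simp_rw [hinner, real_inner_comm (WithLp.toLp 2 x)]
        exact Finset.sum_congr rfl fun k _ => by ring

lemma eigenvalues_eq_one (hA : A.IsHermitian) (h : A = 1) (k : n) : hA.eigenvalues k = 1 := by
  have : Nonempty n := ⟨k⟩
  have hmem := hA.eigenvalues_mem_spectrum_real k
  have hspec : spectrum ℝ A = {1} := by rw [h, spectrum.one_eq]
  rwa [hspec] at hmem

lemma sum_eigenvalues_sub_one_eq_zero (hA : A.IsHermitian) (htr : A.trace = Fintype.card n) :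
    ∑ k, (hA.eigenvalues k - 1) = 0 := by
  have hsum : ∑ k, hA.eigenvalues k = Fintype.card n := by
    simpa [htr] using hA.trace_eq_sum_eigenvalues.symm
  simp [Finset.sum_sub_distrib, hsum]

lemma sum_eigenvalues_sub_one_sq_le (hA : A.PosSemidef) (htr : A.trace = Fintype.card n) :
    ∑ k, (hA.1.eigenvalues k - 1) ^ 2 ≤ (Fintype.card n : ℝ) ^ 2 := by
  have hsum : ∑ k, hA.1.eigenvalues k = Fintype.card n := by
    simpa [htr] using hA.1.trace_eq_sum_eigenvalues.symm
  calc ∑ k, (hA.1.eigenvalues k - 1) ^ 2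
      = ∑ k, hA.1.eigenvalues k ^ 2 - Fintype.card n := by
        simp only [sub_sq, Finset.sum_add_distrib, Finset.sum_sub_distrib, mul_one,
          ← Finset.mul_sum, hsum, one_pow, Finset.sum_const, Finset.card_univ, nsmul_eq_mul]
        ring
    _ ≤ ∑ k, hA.1.eigenvalues k ^ 2 := sub_le_self _ (Nat.cast_nonneg _)
    _ ≤ (∑ k, hA.1.eigenvalues k) ^ 2 :=
        Finset.sum_sq_le_sq_sum_of_nonneg fun k _ => hA.eigenvalues_nonneg k
    _ = (Fintype.card n : ℝ) ^ 2 := by rw [hsum]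

end Eigenvalues

section Haar

open scoped RealInnerProductSpace

variable {d : ℕ}

lemma sum_eigenvalues_sub_one_sq_div_le_one {X : Matrix (Fin d) (Fin d) ℝ}
    (hrows : ∀ i, rowNorm X i = 1) (hsym : (X * Xᵀ).IsHermitian) :
    (∑ k, (hsym.eigenvalues k - 1) ^ 2) / ((d : ℝ) ^ 2 * (d + 2)) ≤ 1 := by
  have hpsd : (X * Xᵀ).PosSemidef := by simpa using posSemidef_self_mul_conjTranspose X
  have hle := sum_eigenvalues_sub_one_sq_le hpsd
    (by simpa using trace_mul_transpose_self_of_rowNorm_eq_one hrows)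
  rw [Fintype.card_fin] at hle
  refine div_le_one_of_le₀ (hle.trans ?_) (by positivity)
  exact le_mul_of_one_le_right (by positivity) (by linarith [d.cast_nonneg (α := ℝ)])

lemma rowNorm_mul_eq_norm_vecMul (W X : Matrix (Fin d) (Fin d) ℝ) (i : Fin d) :
    rowNorm (W * X) i = ‖WithLp.toLp 2 (W i ᵥ* X)‖ :=
  rowNorm_eq_norm (W * X) i

lemma rowNorm_mul_sq_eq_sum_eigenvalues {X : Matrix (Fin d) (Fin d) ℝ}
    (hsym : (X * Xᵀ).IsHermitian) (W : Matrix (Fin d) (Fin d) ℝ) (i : Fin d) :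
    rowNorm (W * X) i ^ 2 =
      ∑ k, hsym.eigenvalues k * ⟪hsym.eigenvectorBasis k, WithLp.toLp 2 (W i)⟫ ^ 2 := by
  rw [← dotProduct_mulVec_self_eq_sum_eigenvalues, rowNorm_eq_norm, EuclideanSpace.norm_sq_eq,
    ← mulVec_mulVec, dotProduct_mulVec, mulVec_transpose]
  simp [dotProduct, mul_apply, vecMul, ← sq]

lemma rowNorm_mul_sq_sub_one {X : Matrix (Fin d) (Fin d) ℝ} (hsym : (X * Xᵀ).IsHermitian)
    {W : Matrix (Fin d) (Fin d) ℝ} (hW : W ∈ orthogonalGroup (Fin d) ℝ) (i : Fin d) :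
    rowNorm (W * X) i ^ 2 - 1 =
      ∑ k, (hsym.eigenvalues k - 1) * ⟪hsym.eigenvectorBasis k, WithLp.toLp 2 (W i)⟫ ^ 2 := by
  have hone : ∑ k, ⟪hsym.eigenvectorBasis k, WithLp.toLp 2 (W i)⟫ ^ 2 = 1 := by
    rw [OrthonormalBasis.sum_sq_inner_right, ← rowNorm_eq_norm, rowNorm_of_mem_orthogonalGroup hW,
      one_pow]
  rw [rowNorm_mul_sq_eq_sum_eigenvalues hsym]
  simp only [sub_mul, one_mul, Finset.sum_sub_distrib, hone]

lemma exists_mem_orthogonalGroup_toLp_vecMul_eq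
    (g : EuclideanSpace ℝ (Fin d) ≃ₗᵢ[ℝ] EuclideanSpace ℝ (Fin d)) :
    ∃ U ∈ orthogonalGroup (Fin d) ℝ, ∀ x, WithLp.toLp 2 (x ᵥ* U) = g (WithLp.toLp 2 x) := by
  let b := EuclideanSpace.basisFun (Fin d) ℝ
  refine ⟨(g.toMatrix b.toBasis b.toBasis)ᵀ,
    transpose_mem_unitaryGroup_iff.2 (g.toMatrix_mem_unitaryGroup b b), fun x => ?_⟩
  rw [vecMul_transpose]
  ext j
  exact congrFun
    (LinearMap.toMatrix_mulVec_repr b.toBasis b.toBasis g.toLinearMap (WithLp.toLp 2 x)) j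

lemma measurable_toLp_row (i : Fin d) :
    Measurable fun W : Matrix (Fin d) (Fin d) ℝ => WithLp.toLp 2 (W i) :=
  (WithLp.measurable_toLp 2 _).comp (measurable_pi_apply i)

namespace IsHaarOrthogonal

variable {μ : Measure (Matrix (Fin d) (Fin d) ℝ)}

lemma ae_mem_orthogonalGroup (hμ : IsHaarOrthogonal μ) :
    ∀ᵐ W ∂μ, W ∈ orthogonalGroup (Fin d) ℝ :=
  hμ.2.1.mono fun _ => (mem_orthogonalGroup_iff' _ _).2

lemma measurePreserving_mul_right (hμ : IsHaarOrthogonal μ) {U : Matrix (Fin d) (Fin d) ℝ}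
    (hU : U ∈ orthogonalGroup (Fin d) ℝ) : MeasurePreserving (· * U) μ μ := by
  refine ⟨?_, (hμ.2.2 U ((mem_orthogonalGroup_iff' _ _).1 hU)).2⟩
  refine measurable_pi_lambda _ fun i => measurable_pi_lambda _ fun j => ?_
  simp only [mul_apply]
  fun_prop

lemma isUniformOnSphere_row (hμ : IsHaarOrthogonal μ) (i : Fin d) :
    IsUniformOnSphere (μ.map fun W => WithLp.toLp 2 (W i)) where
  isProbabilityMeasure :=
    have := hμ.1
    Measure.isProbabilityMeasure_map (measurable_toLp_row i).aemeasurable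
  ae_norm_eq_one := by
    rw [ae_map_iff (measurable_toLp_row i).aemeasurable
      (measurableSet_eq_fun measurable_norm measurable_const)]
    filter_upwards [hμ.ae_mem_orthogonalGroup] with W hW
    rw [← rowNorm_eq_norm, rowNorm_of_mem_orthogonalGroup hW]
  measurePreserving g := by
    obtain ⟨U, hU, hUg⟩ := exists_mem_orthogonalGroup_toLp_vecMul_eq g
    have hmul := hμ.measurePreserving_mul_right hU
    refine ⟨g.continuous.measurable, ?_⟩
    calc (μ.map fun W => WithLp.toLp 2 (W i)).map g
        = (μ.map (· * U)).map fun W => WithLp.toLp 2 (W i) := by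
          rw [Measure.map_map g.continuous.measurable (measurable_toLp_row i),
            Measure.map_map (measurable_toLp_row i) hmul.measurable]
          congr 1 with W : 1
          exact (hUg (W i)).symm
      _ = μ.map fun W => WithLp.toLp 2 (W i) := by rw [hmul.map_eq]

lemma integrable_comp_row (hμ : IsHaarOrthogonal μ) (i : Fin d)
    {f : EuclideanSpace ℝ (Fin d) → ℝ} (hf : Continuous f) :
    Integrable (fun W => f (WithLp.toLp 2 (W i))) μ :=
  ((hμ.isUniformOnSphere_row i).integrable hf).comp_measurable (measurable_toLp_row i)

variable {X : Matrix (Fin d) (Fin d) ℝ}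

lemma integrable_rowNorm_mul_sq_sub_one_sq (hμ : IsHaarOrthogonal μ) (i : Fin d) :
    Integrable (fun W => (rowNorm (W * X) i ^ 2 - 1) ^ 2) μ := by
  simp only [rowNorm_mul_eq_norm_vecMul]
  exact hμ.integrable_comp_row i (f := fun w => (‖WithLp.toLp 2 (w.ofLp ᵥ* X)‖ ^ 2 - 1) ^ 2)
    (by fun_prop)

lemma integral_rowNorm_mul_sq_sub_one_sq (hμ : IsHaarOrthogonal μ)
    (hsym : (X * Xᵀ).IsHermitian) (htr : (X * Xᵀ).trace = d) (i : Fin d) :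
    ∫ W, (rowNorm (W * X) i ^ 2 - 1) ^ 2 ∂μ =
      2 * (∑ k, (hsym.eigenvalues k - 1) ^ 2) / ((d : ℝ) * (d + 2)) := by
  let f (w : EuclideanSpace ℝ (Fin d)) : ℝ :=
    (∑ k, (hsym.eigenvalues k - 1) * ⟪hsym.eigenvectorBasis k, w⟫ ^ 2) ^ 2
  have hf : Continuous f := by fun_prop
  have hmean := sum_eigenvalues_sub_one_eq_zero hsym (by simpa using htr)
  calc ∫ W, (rowNorm (W * X) i ^ 2 - 1) ^ 2 ∂μ = ∫ W, f (WithLp.toLp 2 (W i)) ∂μ := by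
        refine integral_congr_ae ?_
        filter_upwards [hμ.ae_mem_orthogonalGroup] with W hW
        rw [rowNorm_mul_sq_sub_one hsym hW]
    _ = ∫ w, f w ∂(μ.map fun W => WithLp.toLp 2 (W i)) :=
        (integral_map (measurable_toLp_row i).aemeasurable hf.aestronglyMeasurable).symm
    _ = _ := by
        rw [(hμ.isUniformOnSphere_row i).integral_sum_mul_inner_sq_sq, hmean, Fintype.card_fin]
        ring

lemma integrable_isoI_BN_mul [NeZero d] (hμ : IsHaarOrthogonal μ) :
    Integrable (fun W => isoI (BN (W * X))) μ := by
  have := hμ.1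
  refine Integrable.of_bound (measurable_isoI_BN_mul X).aestronglyMeasurable 1
    (.of_forall fun W => ?_)
  rw [Real.norm_of_nonneg (isoI_pos _).le]
  exact isoI_le_one _

lemma one_add_mul_isoI_le_integral_isoI_BN_mul [NeZero d] (hμ : IsHaarOrthogonal μ)
    (hX : X.det ≠ 0) (hrows : ∀ i, rowNorm X i = 1) (hsym : (X * Xᵀ).IsHermitian) :
    (1 + (∑ k, (hsym.eigenvalues k - 1) ^ 2) / ((d : ℝ) ^ 2 * (d + 2))) * isoI X ≤
      ∫ W, isoI (BN (W * X)) ∂μ := by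
  have := hμ.1
  have hd : (d : ℝ) ≠ 0 := NeZero.ne _
  have htr := trace_mul_transpose_self_of_rowNorm_eq_one hrows
  have hint (i : Fin d) : Integrable (fun W => (rowNorm (W * X) i ^ 2 - 1) ^ 2) μ :=
    hμ.integrable_rowNorm_mul_sq_sub_one_sq i
  have hint_sum : Integrable
      (fun W => (∑ i, (rowNorm (W * X) i ^ 2 - 1) ^ 2) / (2 * (d : ℝ) ^ 2)) μ :=
    (integrable_finsetSum _ fun i _ => hint i).div_const _
  calc (1 + (∑ k, (hsym.eigenvalues k - 1) ^ 2) / ((d : ℝ) ^ 2 * (d + 2))) * isoI X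
      = ∫ W, (1 + (∑ i, (rowNorm (W * X) i ^ 2 - 1) ^ 2) / (2 * (d : ℝ) ^ 2)) * isoI X ∂μ := by
        rw [integral_mul_const, integral_add (integrable_const _) hint_sum, integral_div,
          integral_finsetSum _ fun i _ => hint i]
        simp only [hμ.integral_rowNorm_mul_sq_sub_one_sq hsym htr, integral_const, probReal_univ,
          Finset.sum_const, Finset.card_univ, Fintype.card_fin, nsmul_eq_mul, smul_eq_mul, mul_one]
        field_simp
    _ ≤ ∫ W, isoI (BN (W * X)) ∂μ := by
        refine integral_mono_ae (((integrable_const _).add hint_sum).mul_const _)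
          hμ.integrable_isoI_BN_mul ?_
        filter_upwards [hμ.ae_mem_orthogonalGroup] with W hW using
          one_add_sum_sq_mul_isoI_le_isoI_BN_mul hX hrows hW

lemma integral_isoI_BN_mul_of_mem_orthogonalGroup (hμ : IsHaarOrthogonal μ)
    (hX : X ∈ orthogonalGroup (Fin d) ℝ) : ∫ W, isoI (BN (W * X)) ∂μ = isoI X := by
  have := hμ.1
  calc ∫ W, isoI (BN (W * X)) ∂μ = ∫ _, isoI X ∂μ := by
        refine integral_congr_ae ?_
        filter_upwards [hμ.ae_mem_orthogonalGroup] with W hW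
        rw [BN_eq_self (rowNorm_of_mem_orthogonalGroup (mul_mem hW hX)),
          isoI_mul_of_mem_orthogonalGroup hW]
    _ = isoI X := by simp

end IsHaarOrthogonal

end Haar

/-- for nonsingular `X` with unit-norm rows, eigenvalues `λ` of `XXᵀ`,
and `W` Haar-distributed on `O(d)`,
`E[I(BN(WX))] ≥ (1 − Σ_k (λ_k − 1)²/(2d²(d+2)))⁻¹ · I(X)`, with equality when `X`
is orthogonal. -/
theorem expected_isoI_BN_haar_ge {d : ℕ} (hd : 2 ≤ d)
    (X : Matrix (Fin d) (Fin d) ℝ) (hX : X.det ≠ 0)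
    (hrows : ∀ i, ∑ j, X i j ^ 2 = 1)
    (hsym : (X * Xᵀ).IsHermitian)
    (μ : Measure (Matrix (Fin d) (Fin d) ℝ)) (hμ : IsHaarOrthogonal μ) :
    (∫ W, isoI (BN (W * X)) ∂μ) ≥
        (1 - (∑ k, (hsym.eigenvalues k - 1) ^ 2) / (2 * (d : ℝ) ^ 2 * (d + 2)))⁻¹
          * isoI X ∧
      (Xᵀ * X = 1 →
        (∫ W, isoI (BN (W * X)) ∂μ) =
          (1 - (∑ k, (hsym.eigenvalues k - 1) ^ 2) / (2 * (d : ℝ) ^ 2 * (d + 2)))⁻¹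
            * isoI X) := by
  have : NeZero d := ⟨by lia⟩
  have hrow (i : Fin d) : rowNorm X i = 1 := by rw [rowNorm, hrows, Real.sqrt_one]
  refine ⟨?_, fun hXX => ?_⟩
  · set V := ∑ k, (hsym.eigenvalues k - 1) ^ 2
    calc (1 - V / (2 * (d : ℝ) ^ 2 * (d + 2)))⁻¹ * isoI X
        = (1 - V / ((d : ℝ) ^ 2 * (d + 2)) / 2)⁻¹ * isoI X := by
          rw [div_div, mul_comm _ (2 : ℝ), mul_assoc]
      _ ≤ (1 + V / ((d : ℝ) ^ 2 * (d + 2))) * isoI X := by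
          refine mul_le_mul_of_nonneg_right (inv_one_sub_half_le_one_add (by positivity) ?_)
            (isoI_pos X).le
          exact sum_eigenvalues_sub_one_sq_div_le_one hrow hsym
      _ ≤ ∫ W, isoI (BN (W * X)) ∂μ := hμ.one_add_mul_isoI_le_integral_isoI_BN_mul hX hrow hsym
  · have heig := eigenvalues_eq_one hsym (mul_eq_one_comm.1 hXX)
    rw [hμ.integral_isoI_BN_mul_of_mem_orthogonalGroup ((mem_orthogonalGroup_iff' _ _).2 hXX)]
    simp [heig]
end

section
/- Let d ≥ 2, let X ∈ ℝ^{d×d} be nonsingular with all rows of unit Euclidean norm, let λ_1, …, λ_d be the eigenvalues of XXᵀ, and let W be Haar-distributed on the orthogonal group O(d). Set X' = WX. Then for all i ≠ j, E[ ‖X'_{i·}‖ · ‖X'_{j·}‖ ] ≤ 1 − Σ_{k=1}^d (λ_k − 1)² / (2d(d+2)(d−1)). -/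
open MeasureTheory Matrix

/-!
Put `A = X * Xᵀ` and `M = W * A * Wᵀ`; the row norms of `W * X` are the `√(M i i)`. The law of `M`
is invariant under orthogonal conjugation. Hence all `E[(M i j) ^ 2]` with `i ≠ j` equal one
constant `c`, and rotating the plane of the coordinates `i, j` by 45 degrees turns `M i j` into
`(M i i - M j j) / 2` up to sign, so that `E[(M i i - M j j) ^ 2] = 4 * c`. Averaging the identity
`2 * (d * tr (M ^ 2) - (tr M) ^ 2) = ∑ i ≠ j, (2 * d * (M i j) ^ 2 + (M i i - M j j) ^ 2)`, whose
left-hand side depends on `A` only, gives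
`c = (d * tr (A ^ 2) - (tr A) ^ 2) / (d * (d - 1) * (d + 2))`, which is the sum of the squared
deviations of the eigenvalues of `A` from their mean, divided by `(d - 1) * (d + 2)`. The bound is
the average of `√a * √b ≤ (a + b) / 2 - (a - b) ^ 2 / (4 * tr A)`, valid when `a + b ≤ tr A`.
-/

section Matrix

variable {n : Type*} [Fintype n]

theorem one_submatrix_conj {ι R : Type*} [DecidableEq n] [NonAssocSemiring R] (e : ι → n)
    (M : Matrix n n R) :
    (1 : Matrix n n R).submatrix e id * M * ((1 : Matrix n n R).submatrix e id)ᵀ =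
      M.submatrix e e := by
  ext a b
  simp [mul_apply, one_apply]

theorem trace_pow_eq_sum_eigenvalues_pow {𝕜 : Type*} [RCLike 𝕜] [DecidableEq n]
    {A : Matrix n n 𝕜} (hA : A.IsHermitian) (m : ℕ) :
    (A ^ m).trace = ∑ k, (hA.eigenvalues k : 𝕜) ^ m := by
  conv_lhs => rw [hA.spectral_theorem, ← map_pow, Unitary.conjStarAlgAut_apply, trace_mul_cycle]
  simp [diagonal_pow, trace_diagonal]

theorem sum_sq_eigenvalues_sub_mean [DecidableEq n] [Nonempty n] {A : Matrix n n ℝ}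
    (hA : A.IsHermitian) :
    ∑ k, (hA.eigenvalues k - A.trace / Fintype.card n) ^ 2 =
      (A ^ 2).trace - A.trace ^ 2 / Fintype.card n := by
  have hsum : ∑ k, hA.eigenvalues k = A.trace := hA.trace_eq_sum_eigenvalues.symm
  have hsum_sq : ∑ k, hA.eigenvalues k ^ 2 = (A ^ 2).trace :=
    (trace_pow_eq_sum_eigenvalues_pow hA 2).symm
  simp only [sub_sq, Finset.sum_add_distrib, Finset.sum_sub_distrib, ← Finset.mul_sum,
    ← Finset.sum_mul, hsum, hsum_sq, Finset.sum_const, Finset.card_univ, nsmul_eq_mul]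
  field_simp
  ring

theorem trace_conj_of_transpose_mul_self {m R : Type*} [Fintype m] [DecidableEq n] [CommSemiring R]
    {W : Matrix m n R} (hW : Wᵀ * W = 1) (A : Matrix n n R) : (W * A * Wᵀ).trace = A.trace := by
  rw [trace_mul_cycle, hW, Matrix.one_mul]

theorem conj_sq_of_transpose_mul_self {m R : Type*} [Fintype m] [DecidableEq m] [DecidableEq n]
    [CommSemiring R] {W : Matrix m n R} (hW : Wᵀ * W = 1) (A : Matrix n n R) :
    (W * A * Wᵀ) ^ 2 = W * A ^ 2 * Wᵀ := by
  calc (W * A * Wᵀ) ^ 2 = W * A * (Wᵀ * W) * A * Wᵀ := by simp only [sq, Matrix.mul_assoc]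
    _ = W * A ^ 2 * Wᵀ := by simp only [hW, sq, Matrix.mul_one, Matrix.mul_assoc]

theorem isSymm_conj {m R : Type*} [CommSemiring R] {A : Matrix n n R} (hA : A.IsSymm)
    (W : Matrix m n R) : (W * A * Wᵀ).IsSymm := by
  simp [IsSymm, transpose_mul, hA.eq, Matrix.mul_assoc]

theorem trace_mul_transpose_self {m R : Type*} [Fintype m] [Semiring R] (M : Matrix m n R) :
    (M * Mᵀ).trace = ∑ i, ∑ j, M i j ^ 2 := by
  simp only [sq, trace, diag, mul_apply, transpose_apply]

theorem two_mul_card_mul_sum_sq_sub_trace_sq {R : Type*} [CommRing R] (M : Matrix n n R) :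
    2 * (Fintype.card n * ∑ i, ∑ j, M i j ^ 2 - M.trace ^ 2) =
      ∑ p ∈ Finset.univ.offDiag,
        (2 * Fintype.card n * M p.1 p.2 ^ 2 + (M p.1 p.1 - M p.2 p.2) ^ 2) := by
  classical
  set g : n × n → R := fun p =>
    2 * Fintype.card n * M p.1 p.2 ^ 2 + (M p.1 p.1 - M p.2 p.2) ^ 2 with hg
  have hdiag : ∑ p ∈ Finset.univ.diag, g p = 2 * Fintype.card n * ∑ i, M i i ^ 2 := by
    simp [hg, Finset.sum_diag, Finset.mul_sum]
  have hall : ∑ p, g p =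
      2 * (Fintype.card n * ∑ i, ∑ j, M i j ^ 2 - M.trace ^ 2) +
        2 * Fintype.card n * ∑ i, M i i ^ 2 := by
    simp only [hg, Fintype.sum_prod_type, sub_sq, Finset.sum_add_distrib, Finset.sum_sub_distrib,
      ← Finset.mul_sum, ← Finset.sum_mul, Finset.sum_const, Finset.card_univ, nsmul_eq_mul, trace,
      diag]
    ring
  rw [← Finset.univ_product_univ, ← Finset.diag_union_offDiag,
    Finset.sum_union (Finset.disjoint_diag_offDiag _), hdiag] at hall
  linear_combination -hall

theorem exists_mem_unitaryGroup_submatrix_eq {𝕜 ι : Type*} [RCLike 𝕜] [DecidableEq n]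
    [DecidableEq ι] {V : Matrix ι n 𝕜} (hV : V * Vᴴ = 1) {e : ι → n} (he : e.Injective) :
    ∃ U ∈ unitaryGroup n 𝕜, U.submatrix e id = V := by
  set v : n → EuclideanSpace 𝕜 n := Function.extend e (fun a => WithLp.toLp 2 (V a)) 0
  have hve (a : ι) : v (e a) = WithLp.toLp 2 (V a) := he.extend_apply _ _ a
  have hinner (a b : ι) : inner 𝕜 (v (e a)) (v (e b)) = if a = b then 1 else 0 := by
    rw [hve, hve, EuclideanSpace.inner_toLp_toLp]
    exact (congrFun₂ hV b a).trans (by simp [one_apply, eq_comm])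
  have horth : Orthonormal 𝕜 ((Set.range e).domRestrict v) := by
    rw [orthonormal_iff_ite]
    rintro ⟨_, a, rfl⟩ ⟨_, b, rfl⟩
    exact (hinner a b).trans (if_congr (he.eq_iff.symm.trans Subtype.mk_eq_mk.symm) rfl rfl)
  obtain ⟨b, hb⟩ := horth.exists_orthonormalBasis_extension_of_card_eq finrank_euclideanSpace
  refine ⟨of fun i => WithLp.ofLp (b i), mem_unitaryGroup_iff.2 ?_, ?_⟩
  · ext i j
    simpa [one_apply, eq_comm] using! orthonormal_iff_ite.1 b.orthonormal j i
  · ext a k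
    simp [hb (e a) ⟨a, rfl⟩, hve]

end Matrix

/-- The normalized `2 × 2` Hadamard matrix, the orthogonal matrix relating the off-diagonal entry of
a random symmetric matrix to the difference of its diagonal entries. -/
noncomputable def hadamardTwo : Matrix (Fin 2) (Fin 2) ℝ :=
  (√2)⁻¹ • !![1, 1; 1, -1]

theorem hadamardTwo_conj (B : Matrix (Fin 2) (Fin 2) ℝ) :
    hadamardTwo * B * hadamardTwoᵀ =
      (1 / 2 : ℝ) • (!![1, 1; 1, -1] * B * !![1, 1; 1, -1]) := by
  have hsqrt : (√2)⁻¹ * (√2)⁻¹ = (1 / 2 : ℝ) := by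
    rw [← mul_inv, Real.mul_self_sqrt zero_le_two, one_div]
  have hsymm : (!![1, 1; 1, -1] : Matrix (Fin 2) (Fin 2) ℝ)ᵀ = !![1, 1; 1, -1] :=
    (etaExpand_eq _).symm
  simp only [hadamardTwo, transpose_smul, hsymm, Matrix.smul_mul, Matrix.mul_smul, smul_smul,
    hsqrt]

theorem hadamardTwo_mul_transpose : hadamardTwo * hadamardTwoᵀ = 1 := by
  have h := hadamardTwo_conj 1
  rw [Matrix.mul_one, Matrix.mul_one] at h
  rw [h, mul_fin_two, one_fin_two, smul_of]
  norm_num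

theorem hadamardTwo_conj_apply_zero_one {B : Matrix (Fin 2) (Fin 2) ℝ} (hB : B.IsSymm) :
    (hadamardTwo * B * hadamardTwoᵀ) 0 1 = (B 0 0 - B 1 1) / 2 := by
  have hB₀₁ : B 1 0 = B 0 1 := hB.apply 0 1
  rw [hadamardTwo_conj, eta_fin_two B, hB₀₁, mul_fin_two, mul_fin_two]
  simp only [Matrix.smul_apply, of_apply, cons_val_zero, cons_val_one, cons_val', smul_eq_mul]
  ring

theorem sqrt_mul_sqrt_le_add_div_two_sub {a b D : ℝ} (ha : 0 ≤ a) (hb : 0 ≤ b) (hD : 0 < D)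
    (hab : a + b ≤ D) :
    √a * √b ≤ (a + b) / 2 - (a - b) ^ 2 / (4 * D) := by
  have hgap : (a + b) / 2 - √a * √b = (√a - √b) ^ 2 / 2 := by
    linear_combination -(Real.sq_sqrt ha) / 2 - Real.sq_sqrt hb / 2
  have hsum : (√a + √b) ^ 2 ≤ 2 * D :=
    calc (√a + √b) ^ 2 ≤ 2 * (√a ^ 2 + √b ^ 2) := add_sq_le
      _ ≤ 2 * D := by rw [Real.sq_sqrt ha, Real.sq_sqrt hb]; linarith
  have hdiff : (a - b) ^ 2 ≤ (√a - √b) ^ 2 * (2 * D) :=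
    calc (a - b) ^ 2 = (√a ^ 2 - √b ^ 2) ^ 2 := by rw [Real.sq_sqrt ha, Real.sq_sqrt hb]
      _ = (√a - √b) ^ 2 * (√a + √b) ^ 2 := by ring
      _ ≤ (√a - √b) ^ 2 * (2 * D) := by gcongr
  have : (a - b) ^ 2 / (4 * D) ≤ (√a - √b) ^ 2 / 2 := by
    rw [div_le_iff₀ (by positivity)]
    linarith
  linarith

instance matrixBorelSpace {d : ℕ} : BorelSpace (Matrix (Fin d) (Fin d) ℝ) :=
  inferInstanceAs (BorelSpace (Fin d → Fin d → ℝ))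

instance matrixSecondCountableTopology {m n R : Type*} [Countable m] [Countable n]
    [TopologicalSpace R] [SecondCountableTopology R] : SecondCountableTopology (Matrix m n R) :=
  inferInstanceAs (SecondCountableTopology (m → n → R))

theorem isCompact_setOf_transpose_mul_self_eq_one (n : Type*) [Fintype n] [DecidableEq n] :
    IsCompact {W : Matrix n n ℝ | Wᵀ * W = 1} := by
  have hbox : {W : Matrix n n ℝ | Wᵀ * W = 1} ⊆
      Set.univ.pi fun _ => Set.univ.pi fun _ => Set.Icc (-1) 1 := fun W hW i _ j _ =>
    abs_le.1 <| entry_norm_bound_of_unitary ((mem_orthogonalGroup_iff' n ℝ).2 hW) i j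
  exact (isCompact_univ_pi fun _ => isCompact_univ_pi fun _ => isCompact_Icc).of_isClosed_subset
    (isClosed_eq (by fun_prop) continuous_const) hbox

namespace IsHaarOrthogonal

variable {d : ℕ} {μ : Measure (Matrix (Fin d) (Fin d) ℝ)}

section NormedSpace

variable {E : Type*} [NormedAddCommGroup E] {f : Matrix (Fin d) (Fin d) ℝ → E}

theorem integrable_of_continuous (hμ : IsHaarOrthogonal μ) (hf : Continuous f) :
    Integrable f μ := by
  have := hμ.1
  obtain ⟨C, hC⟩ := (isCompact_setOf_transpose_mul_self_eq_one (Fin d)).exists_bound_of_continuousOn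
    hf.continuousOn
  exact .of_bound hf.aestronglyMeasurable C (hμ.2.1.mono hC)

theorem integral_mul_left [NormedSpace ℝ E] (hμ : IsHaarOrthogonal μ) (hf : Continuous f)
    {U : Matrix (Fin d) (Fin d) ℝ} (hU : Uᵀ * U = 1) : ∫ W, f (U * W) ∂μ = ∫ W, f W ∂μ := by
  have hmul : Measurable fun W : Matrix (Fin d) (Fin d) ℝ => U * W :=
    Continuous.measurable (by fun_prop)
  conv_rhs => rw [← (hμ.2.2 U hU).1]
  exact (integral_map hmul.aemeasurable hf.aestronglyMeasurable).symm

end NormedSpace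

section Conj

variable {ι E : Type*} [NormedAddCommGroup E] [NormedSpace ℝ E]
  {f : Matrix ι ι ℝ → E} {e e' : ι → Fin d}

theorem integral_conj_mul [DecidableEq ι] (hμ : IsHaarOrthogonal μ) (A : Matrix (Fin d) (Fin d) ℝ)
    (hf : Continuous f) {V : Matrix ι (Fin d) ℝ} (hV : V * Vᵀ = 1) (he : e.Injective) :
    ∫ W, f (V * (W * A * Wᵀ) * Vᵀ) ∂μ = ∫ W, f ((W * A * Wᵀ).submatrix e e) ∂μ := by
  obtain ⟨U, hU, rfl⟩ := exists_mem_unitaryGroup_submatrix_eq (𝕜 := ℝ) hV he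
  rw [← hμ.integral_mul_left (f := fun W => f ((W * A * Wᵀ).submatrix e e)) (by fun_prop)
    ((mem_orthogonalGroup_iff' _ ℝ).1 hU)]
  congr! 3 with W
  simp only [transpose_mul, ← Matrix.mul_assoc]
  rfl

theorem integral_conj_submatrix_conj [Fintype ι] [DecidableEq ι] (hμ : IsHaarOrthogonal μ)
    (A : Matrix (Fin d) (Fin d) ℝ) (hf : Continuous f) {Q : Matrix ι ι ℝ} (hQ : Q * Qᵀ = 1)
    (he' : e'.Injective) (he : e.Injective) :
    ∫ W, f (Q * (W * A * Wᵀ).submatrix e' e' * Qᵀ) ∂μ =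
      ∫ W, f ((W * A * Wᵀ).submatrix e e) ∂μ := by
  set S : Matrix ι (Fin d) ℝ := (1 : Matrix (Fin d) (Fin d) ℝ).submatrix e' id
  have hconj (M : Matrix (Fin d) (Fin d) ℝ) :
      Q * S * M * (Q * S)ᵀ = Q * M.submatrix e' e' * Qᵀ := by
    rw [← one_submatrix_conj e' M]
    simp only [S, transpose_mul, Matrix.mul_assoc]
  have hQS : Q * S * (Q * S)ᵀ = 1 := by
    simpa [submatrix_one _ he', hQ] using hconj 1
  simpa only [hconj] using hμ.integral_conj_mul A hf hQS he

theorem integral_conj_submatrix [Finite ι] (hμ : IsHaarOrthogonal μ)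
    (A : Matrix (Fin d) (Fin d) ℝ) (hf : Continuous f) (he' : e'.Injective) (he : e.Injective) :
    ∫ W, f ((W * A * Wᵀ).submatrix e' e') ∂μ = ∫ W, f ((W * A * Wᵀ).submatrix e e) ∂μ := by
  classical
  have := Fintype.ofFinite ι
  simpa only [transpose_one, Matrix.one_mul, Matrix.mul_one] using
    hμ.integral_conj_submatrix_conj A hf (Q := 1) (by simp) he' he

end Conj

variable {A : Matrix (Fin d) (Fin d) ℝ} {i j k l : Fin d}

theorem integral_conj_diag (hμ : IsHaarOrthogonal μ) (A : Matrix (Fin d) (Fin d) ℝ) (i : Fin d) :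
    ∫ W, (W * A * Wᵀ) i i ∂μ = A.trace / d := by
  have := hμ.1
  have hd : (d : ℝ) ≠ 0 := Nat.cast_ne_zero.2 i.pos.ne'
  have hconst (k : Fin d) : ∫ W, (W * A * Wᵀ) k k ∂μ = ∫ W, (W * A * Wᵀ) i i ∂μ :=
    hμ.integral_conj_submatrix A (f := fun M : Matrix Unit Unit ℝ => M () ()) (by fun_prop)
      (e' := fun _ => k) (e := fun _ => i) (Function.injective_of_subsingleton _)
      (Function.injective_of_subsingleton _)
  have hsum : ∑ k, ∫ W, (W * A * Wᵀ) k k ∂μ = A.trace := by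
    rw [← integral_finsetSum _ fun k _ => hμ.integrable_of_continuous (by fun_prop)]
    calc ∫ W, (W * A * Wᵀ).trace ∂μ = ∫ _, A.trace ∂μ :=
          integral_congr_ae (hμ.2.1.mono fun W hW => trace_conj_of_transpose_mul_self hW A)
      _ = A.trace := by simp
  rw [eq_div_iff hd, ← hsum]
  simp [hconst, mul_comm]

theorem integral_conj_offDiag_sq_congr (hμ : IsHaarOrthogonal μ) (A : Matrix (Fin d) (Fin d) ℝ)
    (hij : i ≠ j) (hkl : k ≠ l) :
    ∫ W, (W * A * Wᵀ) i j ^ 2 ∂μ = ∫ W, (W * A * Wᵀ) k l ^ 2 ∂μ :=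
  hμ.integral_conj_submatrix A (f := fun M : Matrix (Fin 2) (Fin 2) ℝ => M 0 1 ^ 2) (by fun_prop)
    (injective_pair_iff_ne.2 hij) (injective_pair_iff_ne.2 hkl)

theorem integral_conj_diag_sub_diag_sq (hμ : IsHaarOrthogonal μ) (hA : A.IsSymm) (hij : i ≠ j) :
    ∫ W, ((W * A * Wᵀ) i i - (W * A * Wᵀ) j j) ^ 2 ∂μ = 4 * ∫ W, (W * A * Wᵀ) i j ^ 2 ∂μ := by
  have he : ![i, j].Injective := injective_pair_iff_ne.2 hij
  calc ∫ W, ((W * A * Wᵀ) i i - (W * A * Wᵀ) j j) ^ 2 ∂μ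
      = ∫ W, 4 * (hadamardTwo * (W * A * Wᵀ).submatrix ![i, j] ![i, j] * hadamardTwoᵀ) 0 1 ^ 2
          ∂μ := by
        congr! 2 with W
        rw [hadamardTwo_conj_apply_zero_one ((isSymm_conj hA W).submatrix _)]
        simp only [submatrix_apply, cons_val_zero, cons_val_one]
        ring
    _ = 4 * ∫ W, (W * A * Wᵀ) i j ^ 2 ∂μ := by
        rw [integral_const_mul]
        exact congrArg (4 * ·) <| hμ.integral_conj_submatrix_conj A
          (f := fun M : Matrix (Fin 2) (Fin 2) ℝ => M 0 1 ^ 2) (by fun_prop)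
          hadamardTwo_mul_transpose he he

theorem integral_conj_offDiag_sq (hμ : IsHaarOrthogonal μ) (hA : A.IsSymm) (hij : i ≠ j) :
    d * (d - 1) * (d + 2) * ∫ W, (W * A * Wᵀ) i j ^ 2 ∂μ = d * (A ^ 2).trace - A.trace ^ 2 := by
  have := hμ.1
  have hcard : ((Finset.univ : Finset (Fin d)).offDiag.card : ℝ) = d * (d - 1) := by
    rw [Finset.offDiag_card, Finset.card_fin, Nat.cast_sub (Nat.le_mul_self d)]
    push_cast
    ring
  have hpair (p : Fin d × Fin d) (hp : p ∈ Finset.univ.offDiag) :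
      ∫ W, (2 * (d : ℝ) * (W * A * Wᵀ) p.1 p.2 ^ 2 +
        ((W * A * Wᵀ) p.1 p.1 - (W * A * Wᵀ) p.2 p.2) ^ 2) ∂μ =
      2 * (d + 2) * ∫ W, (W * A * Wᵀ) i j ^ 2 ∂μ := by
    have hne : p.1 ≠ p.2 := (Finset.mem_offDiag.1 hp).2.2
    rw [integral_add (hμ.integrable_of_continuous (by fun_prop))
      (hμ.integrable_of_continuous (by fun_prop)), integral_const_mul,
      hμ.integral_conj_diag_sub_diag_sq hA hne, hμ.integral_conj_offDiag_sq_congr A hne hij]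
    ring
  have hinv : ∀ᵐ W ∂μ, ∑ p ∈ Finset.univ.offDiag, (2 * (d : ℝ) * (W * A * Wᵀ) p.1 p.2 ^ 2 +
      ((W * A * Wᵀ) p.1 p.1 - (W * A * Wᵀ) p.2 p.2) ^ 2) =
      2 * (d * (A ^ 2).trace - A.trace ^ 2) := by
    filter_upwards [hμ.2.1] with W hW
    have h := two_mul_card_mul_sum_sq_sub_trace_sq (W * A * Wᵀ)
    rw [← trace_mul_transpose_self, isSymm_conj hA W, ← sq, conj_sq_of_transpose_mul_self hW,
      trace_conj_of_transpose_mul_self hW, trace_conj_of_transpose_mul_self hW,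
      Fintype.card_fin] at h
    exact h.symm
  have hint := integral_congr_ae hinv
  rw [integral_finsetSum _ fun p _ => hμ.integrable_of_continuous (by fun_prop),
    Finset.sum_congr rfl hpair, Finset.sum_const, nsmul_eq_mul, hcard, integral_const,
    probReal_univ, one_smul] at hint
  linear_combination hint / 2

theorem integral_sqrt_conj_diag_mul_sqrt_conj_diag_le (hμ : IsHaarOrthogonal μ)
    (hA : A.PosSemidef) (hA₀ : A ≠ 0) (hij : i ≠ j) :
    ∫ W, √((W * A * Wᵀ) i i) * √((W * A * Wᵀ) j j) ∂μ ≤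
      A.trace / d - (∫ W, (W * A * Wᵀ) i j ^ 2 ∂μ) / A.trace := by
  have hT : 0 < A.trace := hA.trace_nonneg.lt_of_ne' (mt hA.trace_eq_zero_iff.1 hA₀)
  have hbound : ∀ᵐ W ∂μ, √((W * A * Wᵀ) i i) * √((W * A * Wᵀ) j j) ≤
      ((W * A * Wᵀ) i i + (W * A * Wᵀ) j j) / 2 -
        ((W * A * Wᵀ) i i - (W * A * Wᵀ) j j) ^ 2 / (4 * A.trace) := by
    filter_upwards [hμ.2.1] with W hW
    have hnonneg (k : Fin d) : 0 ≤ (W * A * Wᵀ) k k := (hA.mul_mul_conjTranspose_same W).diag_nonneg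
    refine sqrt_mul_sqrt_le_add_div_two_sub (hnonneg i) (hnonneg j) hT ?_
    calc (W * A * Wᵀ) i i + (W * A * Wᵀ) j j ≤ (W * A * Wᵀ).trace :=
          Finset.add_le_sum (fun k _ => hnonneg k) (Finset.mem_univ i) (Finset.mem_univ j) hij
      _ = A.trace := trace_conj_of_transpose_mul_self hW A
  have hint {f : Matrix (Fin d) (Fin d) ℝ → ℝ} (hf : Continuous f) : Integrable f μ :=
    hμ.integrable_of_continuous hf
  calc ∫ W, √((W * A * Wᵀ) i i) * √((W * A * Wᵀ) j j) ∂μ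
      ≤ ∫ W, (((W * A * Wᵀ) i i + (W * A * Wᵀ) j j) / 2 -
          ((W * A * Wᵀ) i i - (W * A * Wᵀ) j j) ^ 2 / (4 * A.trace)) ∂μ :=
        integral_mono_ae (hint (by fun_prop)) (hint (by fun_prop)) hbound
    _ = (A.trace / d + A.trace / d) / 2 -
          4 * (∫ W, (W * A * Wᵀ) i j ^ 2 ∂μ) / (4 * A.trace) := by
        rw [integral_sub (hint (by fun_prop)) (hint (by fun_prop)), integral_div, integral_div,
          integral_add (hint (by fun_prop)) (hint (by fun_prop)), hμ.integral_conj_diag,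
          hμ.integral_conj_diag,
          hμ.integral_conj_diag_sub_diag_sq (isHermitian_iff_isSymm.1 hA.isHermitian) hij]
    _ = A.trace / d - (∫ W, (W * A * Wᵀ) i j ^ 2 ∂μ) / A.trace := by
        rw [mul_div_mul_left _ _ four_ne_zero, add_self_div_two]

end IsHaarOrthogonal

theorem rowNorm_mul_eq_sqrt {d : ℕ} (W X : Matrix (Fin d) (Fin d) ℝ) (i : Fin d) :
    rowNorm (W * X) i = √((W * (X * Xᵀ) * Wᵀ) i i) := by
  have hgram : W * (X * Xᵀ) * Wᵀ = W * X * (W * X)ᵀ := by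
    simp only [transpose_mul, Matrix.mul_assoc]
  simp only [rowNorm, hgram, mul_apply (N := (W * X)ᵀ), transpose_apply, sq]

theorem expected_rowNorm_prod_le_general {d : ℕ} {X : Matrix (Fin d) (Fin d) ℝ} (hX : X ≠ 0)
    (hsym : (X * Xᵀ).IsHermitian) {μ : Measure (Matrix (Fin d) (Fin d) ℝ)}
    (hμ : IsHaarOrthogonal μ) {i j : Fin d} (hij : i ≠ j) :
    ∫ W, rowNorm (W * X) i * rowNorm (W * X) j ∂μ ≤
      (X * Xᵀ).trace / d - (∑ k, (hsym.eigenvalues k - (X * Xᵀ).trace / d) ^ 2) /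
        ((X * Xᵀ).trace * (d + 2) * (d - 1)) := by
  have : Nonempty (Fin d) := ⟨i⟩
  have hd : (1 : ℝ) < d := by
    have := Fin.nontrivial_iff_two_le.1 ⟨i, j, hij⟩
    exact_mod_cast this
  set A := X * Xᵀ
  have hA : A.PosSemidef := posSemidef_self_mul_conjTranspose X
  have hA₀ : A ≠ 0 := self_mul_conjTranspose_eq_zero.not.2 hX
  have hvar : ∑ k, (hsym.eigenvalues k - A.trace / d) ^ 2 =
      (∫ W, (W * A * Wᵀ) i j ^ 2 ∂μ) * ((d + 2) * (d - 1)) := by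
    have hspec := sum_sq_eigenvalues_sub_mean hsym
    rw [Fintype.card_fin] at hspec
    rw [hspec, sub_eq_iff_eq_add]
    field_simp
    linear_combination -hμ.integral_conj_offDiag_sq (isHermitian_iff_isSymm.1 hsym) hij
  rw [hvar, mul_assoc A.trace,
    mul_div_mul_right _ _ (mul_pos (by positivity) (sub_pos.2 hd)).ne']
  simpa only [rowNorm_mul_eq_sqrt] using
    hμ.integral_sqrt_conj_diag_mul_sqrt_conj_diag_le hA hA₀ hij

/-- for nonsingular `X` with unit-norm rows, eigenvalues `λ` of `XXᵀ`,
`W` Haar on `O(d)` and `X' = WX`, for all `i ≠ j`,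
`E[‖X'_{i·}‖·‖X'_{j·}‖] ≤ 1 − Σ_k (λ_k − 1)²/(2d(d+2)(d−1))`. -/
theorem expected_rowNorm_prod_le {d : ℕ} (hd : 2 ≤ d)
    (X : Matrix (Fin d) (Fin d) ℝ) (hX : X.det ≠ 0)
    (hrows : ∀ i, ∑ j, X i j ^ 2 = 1)
    (hsym : (X * Xᵀ).IsHermitian)
    (μ : Measure (Matrix (Fin d) (Fin d) ℝ)) (hμ : IsHaarOrthogonal μ) :
    ∀ i j : Fin d, i ≠ j →
      (∫ W, rowNorm (W * X) i * rowNorm (W * X) j ∂μ) ≤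
        1 - (∑ k, (hsym.eigenvalues k - 1) ^ 2) /
              (2 * (d : ℝ) * ((d : ℝ) + 2) * ((d : ℝ) - 1)) := by
  intro i j hij
  have hd₁ : (0 : ℝ) < d - 1 := sub_pos.2 (by exact_mod_cast hd)
  have htr : (X * Xᵀ).trace = d := by simp [trace_mul_transpose_self, hrows]
  have hX₀ : X ≠ 0 := fun h =>
    hX <| det_eq_zero_of_row_eq_zero i fun _ => by rw [h, Matrix.zero_apply]
  have hgen := expected_rowNorm_prod_le_general hX₀ hsym hμ hij
  rw [htr, div_self (by positivity)] at hgen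
  refine hgen.trans (sub_le_sub_left ?_ 1)
  gcongr
  linarith [d.cast_nonneg (α := ℝ)]
end
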